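/- Let Σ be a symmetric positive definite p×p real matrix with (symmetric positive definite) square root Σ^{1/2}, let A be a symmetric p×p real matrix with AΣ ≠ 0, and set M = Σ^{1/2} A Σ^{1/2}. Then for every K ∈ (0,1) and every real t with |t| < K/‖AΣ‖_∞, the matrix I_p − tM is invertible and det(I_p − tM)^{−1} ≤ exp( t·Tr(AΣ) + t²‖AΣ‖_F²/(2(1−K)) ). -/

import Mathlib

open MeasureTheory Matrix Real
open scoped ENNReal BigOperators NNReal

noncomputable def gaussianPDF {p : ℕ} (C : Matrix (Fin p) (Fin p) ℝ) (x : Fin p → ℝ) : ℝ≥0∞ :=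
  ENNReal.ofReal ((2 * Real.pi) ^ (-(p : ℝ) / 2) * C.det ^ (-(1:ℝ)/2) *
    Real.exp (-(1/2) * (x ⬝ᵥ C⁻¹.mulVec x)))

/-- The centered multivariate Gaussian measure `N_p(0, C)` on `Fin p → ℝ`. -/
noncomputable def gaussianMeasure {p : ℕ} (C : Matrix (Fin p) (Fin p) ℝ) :
    Measure (Fin p → ℝ) :=
  MeasureTheory.volume.withDensity (gaussianPDF C)

/-- The law of `n` i.i.d. `N_p(0, C)` vectors. -/
noncomputable def iidGaussian (n p : ℕ) (C : Matrix (Fin p) (Fin p) ℝ) :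
    Measure (Fin n → Fin p → ℝ) :=
  MeasureTheory.volume.withDensity fun X => ∏ k, gaussianPDF C (X k)

/-- The sample covariance matrix `Σ_n = (1/n) ∑ X_k X_kᵀ`. -/
noncomputable def sampleCov {n p : ℕ} (X : Fin n → Fin p → ℝ) :
    Matrix (Fin p) (Fin p) ℝ :=
  (n : ℝ)⁻¹ • ∑ k, Matrix.of fun i j => X k i * X k j

/-- Frobenius norm of a matrix. -/
noncomputable def frobNorm {p : ℕ} (M : Matrix (Fin p) (Fin p) ℝ) : ℝ :=
  Real.sqrt (∑ i, ∑ j, (M i j)^2)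

/-- Spectral (ℓ²-operator) norm of a matrix. -/
noncomputable def specNorm {p : ℕ} (M : Matrix (Fin p) (Fin p) ℝ) : ℝ :=
  ‖Matrix.toEuclideanCLM (𝕜 := ℝ) M‖

/-- The matrix `A_j` with entries `1/(2(p-j))` on the `j`-th upper and lower diagonals. -/
noncomputable def lagMatrix (p j : ℕ) : Matrix (Fin p) (Fin p) ℝ :=
  Matrix.of fun k l => if ((k:ℤ) - (l:ℤ)).natAbs = j then 1/(2*((p:ℝ) - j)) else 0

/-- Two-sided class `F(s,S,σ)` of sparse Toeplitz covariance matrices with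
diagonal value `σ0`. -/
def memF (p s S : ℕ) (σ σ0 : ℝ) (C : Matrix (Fin p) (Fin p) ℝ) : Prop :=
  C.PosDef ∧ ∃ v : ℕ → ℝ, v 0 = σ0 ∧
    (∀ i j : Fin p, C i j = v ((i:ℤ) - (j:ℤ)).natAbs) ∧
    ∃ T : Finset ℕ, T ⊆ Finset.Icc 1 S ∧ T.card = s ∧
      (∀ j ∈ T, σ ≤ |v j|) ∧ (∀ j, 1 ≤ j → j ≤ p - 1 → j ∉ T → v j = 0)

/-- One-sided class `F₊(s,S,σ)` of sparse Toeplitz covariance matrices with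
diagonal value `σ0`. -/
def memFplus (p s S : ℕ) (σ σ0 : ℝ) (C : Matrix (Fin p) (Fin p) ℝ) : Prop :=
  C.PosDef ∧ ∃ v : ℕ → ℝ, v 0 = σ0 ∧
    (∀ i j : Fin p, C i j = v ((i:ℤ) - (j:ℤ)).natAbs) ∧
    ∃ T : Finset ℕ, T ⊆ Finset.Icc 1 S ∧ T.card = s ∧
      (∀ j ∈ T, σ ≤ v j) ∧ (∀ j, 1 ≤ j → j ≤ p - 1 → j ∉ T → v j = 0)


lemma neg_log_one_sub_le {x K : ℝ} (hK : K < 1) (hx : |x| ≤ K) :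
    -Real.log (1 - x) ≤ x + x ^ 2 / (2 * (1 - K)) := by
  have hxK : x ≤ K := (le_abs_self x).trans hx
  have hK0 : 0 ≤ K := (abs_nonneg x).trans hx
  rcases le_total 0 x with h0 | h0
  · have h1 : 0 < 1 - x := by linarith
    have hlog : 0 ≤ Real.log (1 - x)⁻¹ :=
      Real.log_nonneg ((one_le_inv₀ h1).2 (by linarith))
    have h2 := Real.self_le_sinh_iff.2 hlog
    rw [Real.sinh_log (inv_pos.2 h1), Real.log_inv, inv_inv] at h2
    calc -Real.log (1 - x) ≤ ((1 - x)⁻¹ - (1 - x)) / 2 := h2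
      _ = x + x ^ 2 / (2 * (1 - x)) := by field_simp; ring
      _ ≤ x + x ^ 2 / (2 * (1 - K)) := by
        have : 0 < 1 - K := by linarith
        gcongr
  · have h2 := Real.le_log_one_add_of_nonneg (neg_nonneg.2 h0)
    rw [← sub_eq_add_neg] at h2
    have h3 : -x - x ^ 2 / 2 ≤ 2 * -x / (-x + 2) := by
      rw [le_div_iff₀ (by linarith)]
      nlinarith [mul_nonneg (sq_nonneg x) (neg_nonneg.2 h0)]
    have h4 : x ^ 2 / 2 ≤ x ^ 2 / (2 * (1 - K)) := by
      have : 0 < 1 - K := by linarith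
      gcongr
      linarith
    linarith

lemma inv_one_sub_le_exp {x K : ℝ} (hK : K < 1) (hx : |x| ≤ K) :
    (1 - x)⁻¹ ≤ Real.exp (x + x ^ 2 / (2 * (1 - K))) := by
  have h1 : 0 < 1 - x := by linarith [le_abs_self x]
  rw [← Real.exp_log (inv_pos.2 h1), Real.log_inv]
  exact Real.exp_le_exp.2 (neg_log_one_sub_le hK hx)

lemma abs_le_specNorm_of_mem_spectrum {p : ℕ} {B : Matrix (Fin p) (Fin p) ℝ} {r : ℝ}
    (hr : r ∈ spectrum ℝ B) : |r| ≤ specNorm B := by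
  have : Nontrivial (EuclideanSpace ℝ (Fin p)) := by
    rcases subsingleton_or_nontrivial (Matrix (Fin p) (Fin p) ℝ) with h | h
    · simp [spectrum.of_subsingleton] at hr
    · have : Nonempty (Fin p) := by
        by_contra h0
        rw [not_nonempty_iff] at h0
        exact not_subsingleton _ (inferInstance : Subsingleton (Matrix (Fin p) (Fin p) ℝ))
      infer_instance
  rw [← AlgEquiv.spectrum_eq (Matrix.toEuclideanCLM (n := Fin p) (𝕜 := ℝ))] at hr
  exact spectrum.norm_le_norm_of_mem hr

lemma trace_mul_self_le_frobNorm_sq {p : ℕ} (B : Matrix (Fin p) (Fin p) ℝ) :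
    (B * B).trace ≤ frobNorm B ^ 2 := by
  have hsymm : ∑ i, ∑ j, B j i ^ 2 = ∑ i, ∑ j, B i j ^ 2 := Finset.sum_comm
  rw [frobNorm, Real.sq_sqrt (by positivity)]
  calc (B * B).trace = ∑ i, ∑ j, B i j * B j i := by simp [Matrix.trace, Matrix.mul_apply]
    _ ≤ ∑ i, ∑ j, (B i j ^ 2 + B j i ^ 2) / 2 := by
      gcongr with i _ j _
      nlinarith [sq_nonneg (B i j - B j i)]
    _ = ∑ i, ∑ j, B i j ^ 2 := by
      simp_rw [← Finset.sum_div, Finset.sum_add_distrib]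
      rw [hsymm]
      ring

lemma Matrix.IsHermitian.det_one_sub_smul {p : ℕ} {M : Matrix (Fin p) (Fin p) ℝ}
    (hM : M.IsHermitian) (t : ℝ) :
    (1 - t • M).det = ∏ i, (1 - t * hM.eigenvalues i) := by
  have h : 1 - t • M = Unitary.conjStarAlgAut ℝ _ hM.eigenvectorUnitary
      (Matrix.diagonal fun i => 1 - t * hM.eigenvalues i) := by
    have hd : (Matrix.diagonal fun i => 1 - t * hM.eigenvalues i) =
        1 - t • Matrix.diagonal (RCLike.ofReal ∘ hM.eigenvalues : Fin p → ℝ) := by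
      ext i j
      by_cases hij : i = j <;> simp [hij]
    rw [hd, map_sub, map_smul, map_one, ← hM.spectral_theorem]
  rw [h, Unitary.conjStarAlgAut_apply, Matrix.det_mul_right_comm,
    Unitary.mul_star_self_of_mem hM.eigenvectorUnitary.2, one_mul, Matrix.det_diagonal]

lemma Matrix.IsHermitian.trace_mul_self {p : ℕ} {M : Matrix (Fin p) (Fin p) ℝ}
    (hM : M.IsHermitian) : (M * M).trace = ∑ i, hM.eigenvalues i ^ 2 := by
  conv_lhs => rw [hM.spectral_theorem]
  rw [← map_mul, Unitary.conjStarAlgAut_apply, Matrix.trace_mul_cycle,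
    Unitary.coe_star_mul_self, one_mul]
  simp [Matrix.diagonal_mul_diagonal, sq]

/-- Determinant bound for `I − tM`, `M = Σ^{1/2} A Σ^{1/2}`. -/
theorem det_one_sub_smul_bound {p : ℕ}
    (Cov R A : Matrix (Fin p) (Fin p) ℝ) (hCov : Cov.PosDef)
    (hR : R.PosDef) (hRR : R * R = Cov)
    (hA : A.IsSymm) (hAC : A * Cov ≠ 0)
    (K t : ℝ) (hK : K ∈ Set.Ioo (0:ℝ) 1) (ht : |t| < K / specNorm (A * Cov)) :
    IsUnit ((1 : Matrix (Fin p) (Fin p) ℝ) - t • (R * A * R)) ∧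
    (((1 : Matrix (Fin p) (Fin p) ℝ) - t • (R * A * R)).det)⁻¹ ≤
      Real.exp (t * Matrix.trace (A * Cov) +
        t^2 * (frobNorm (A * Cov))^2 / (2 * (1 - K))) := by
  obtain ⟨hK0, hK1⟩ := hK
  have hM : (R * A * R).IsHermitian := by
    have h := Matrix.isHermitian_mul_mul_conjTranspose R
      (show A.IsHermitian by simpa [Matrix.IsHermitian] using hA.eq)
    rwa [hR.isHermitian.eq] at h
  have hconj : R * (A * Cov) * R⁻¹ = R * A * R := by
    have hdet : IsUnit R.det := hR.det_pos.ne'.isUnit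
    rw [← hRR]
    simp only [Matrix.mul_assoc, Matrix.mul_nonsing_inv _ hdet, mul_one]
  have hspec : spectrum ℝ (R * A * R) = spectrum ℝ (A * Cov) := by
    obtain ⟨u, hu⟩ := hR.isUnit
    rw [← hconj, ← hu, ← Matrix.coe_units_inv, spectrum.units_conjugate]
  have hpos : 0 < specNorm (A * Cov) := by
    rw [specNorm, norm_pos_iff]
    exact (map_ne_zero_iff _ (Matrix.toEuclideanCLM (n := Fin p) (𝕜 := ℝ)).injective).2 hAC
  have heig : ∀ i, |t * hM.eigenvalues i| < K := fun i => by
    have h := abs_le_specNorm_of_mem_spectrum (hspec ▸ hM.eigenvalues_mem_spectrum_real i)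
    rw [abs_mul]
    calc |t| * |hM.eigenvalues i| ≤ |t| * specNorm (A * Cov) := by gcongr
      _ < K := (lt_div_iff₀ hpos).1 ht
  have hfac : ∀ i, 0 < 1 - t * hM.eigenvalues i := fun i => by
    linarith [heig i, le_abs_self (t * hM.eigenvalues i)]
  have htr : ∑ i, hM.eigenvalues i = (A * Cov).trace := by
    have h := hM.trace_eq_sum_eigenvalues
    rw [Matrix.trace_mul_cycle, hRR, Matrix.trace_mul_comm] at h
    simpa using h.symm
  have htr2 : ∑ i, hM.eigenvalues i ^ 2 ≤ frobNorm (A * Cov) ^ 2 := by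
    rw [← hM.trace_mul_self]
    have h : (R * A * R * (R * A * R)).trace = (A * Cov * (A * Cov)).trace := by
      rw [← hRR, show R * A * R * (R * A * R) = R * (A * R * (R * A * R)) by
        simp only [Matrix.mul_assoc], Matrix.trace_mul_comm]
      simp only [Matrix.mul_assoc]
    exact h ▸ trace_mul_self_le_frobNorm_sq _
  have hK' : 0 < 1 - K := by linarith
  refine ⟨?_, ?_⟩
  · rw [Matrix.isUnit_iff_isUnit_det, hM.det_one_sub_smul]
    exact (Finset.prod_pos fun i _ => hfac i).ne'.isUnit
  · rw [hM.det_one_sub_smul, ← Finset.prod_inv_distrib]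
    calc ∏ i, (1 - t * hM.eigenvalues i)⁻¹
        ≤ ∏ i, Real.exp (t * hM.eigenvalues i +
            (t * hM.eigenvalues i) ^ 2 / (2 * (1 - K))) :=
          Finset.prod_le_prod (fun i _ => (inv_pos.2 (hfac i)).le)
            fun i _ => inv_one_sub_le_exp hK1 (heig i).le
      _ = Real.exp (t * (A * Cov).trace +
            t ^ 2 * (∑ i, hM.eigenvalues i ^ 2) / (2 * (1 - K))) := by
          rw [← Real.exp_sum, Finset.sum_add_distrib, ← Finset.mul_sum, htr, ← Finset.sum_div]
          simp_rw [mul_pow]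
          rw [← Finset.mul_sum]
      _ ≤ _ := by gcongr
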